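/- Fix c ≥ 0 and for 0 ≤ t < 1 define u_c(t,x) = v( (c+t)/(1−t), x/(1−t) ), where v(c',y) = √((x_+(c')−y)(y−x_−(c')))/(2πy)·χ_{(x_−(c'),x_+(c'))}(y) with x_±(c') = (√(c'+1) ± 1)². Then for every t ∈ [0,1) and every x in the support of u_c(t,·) (i.e. with 2(2+c−t)x − (c+t)² − x² > 0), the Marchenko–Pastur family u_c satisfies the nonlocal transport equation ∂_t u_c(t,x) + (1/π)·∂_x [ arctan( Hu_c(t,·)(x) / u_c(t,x) ) ] = 0. -/

import Mathlib

open MeasureTheory Real Filter Topology Set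

/-- Chebyshev polynomial of the first kind, `T_k`, evaluated at a real number. -/
noncomputable def chebT (k : ℕ) (x : ℝ) : ℝ := (Polynomial.Chebyshev.T ℝ k).eval x

/-- Chebyshev polynomial of the second kind, `U_k`, evaluated at a real number. -/
noncomputable def chebU (k : ℕ) (x : ℝ) : ℝ := (Polynomial.Chebyshev.U ℝ k).eval x

/-- `HasHilbertTransform f x L` means the Hilbert transform
`Hf(x) = (1/π) · p.v. ∫ f(y)/(x−y) dy` exists and equals `L`, the principal value
being the limit as `ε → 0⁺` of the integral over `{y : |x−y| > ε}`. -/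
def HasHilbertTransform (f : ℝ → ℝ) (x L : ℝ) : Prop :=
  Tendsto (fun ε : ℝ => (1 / π) * ∫ y in {y : ℝ | ε < |x - y|}, f y / (x - y))
    (𝓝[>] 0) (𝓝 L)

/-- Left edge `x_− = (√(c+1) − 1)²` of the Marchenko–Pastur distribution. -/
noncomputable def mpXm (c : ℝ) : ℝ := (Real.sqrt (c + 1) - 1) ^ 2

/-- Right edge `x_+ = (√(c+1) + 1)²` of the Marchenko–Pastur distribution. -/
noncomputable def mpXp (c : ℝ) : ℝ := (Real.sqrt (c + 1) + 1) ^ 2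

/-- Marchenko–Pastur density `v(c,y) = √((x_+−y)(y−x_−))/(2πy)` on `(x_−, x_+)`,
extended by `0` outside. -/
noncomputable def mpDensity (c : ℝ) (y : ℝ) : ℝ :=
  Set.indicator (Set.Ioo (mpXm c) (mpXp c))
    (fun z => Real.sqrt ((mpXp c - z) * (z - mpXm c)) / (2 * π * z)) y

/-!
Completing the square turns `2 π x u_c(t, x)` into the semicircle `√(r² - (x - m)²)` with centre
`m = 2 + c - t`, where `m² - r² = (c + t)²`. The Hilbert transform of a centred semicircle is
`H(x) = x` inside the support, and dividing by the variable only adds a Stieltjes integral, by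
partial fractions. Altogether `H u_c = (x - (c + t)) / (2 π x)`, so that
`H u_c / u_c = (x - (c + t)) / √(r² - (x - m)²)`, and the equation becomes a computation with
elementary functions.
-/

section PrincipalValue

variable {f G : ℝ → ℝ} {a b k x : ℝ}

lemma measurableSet_lt_abs_sub (x ε : ℝ) : MeasurableSet {y : ℝ | ε < |x - y|} :=
  measurableSet_lt measurable_const (by fun_prop)

lemma integrableOn_div_sub (hf : Integrable f) {ε : ℝ} (hε : 0 < ε) (x : ℝ) :
    IntegrableOn (fun y => f y / (x - y)) {y | ε < |x - y|} := by
  have hbound : ∀ᵐ y ∂volume.restrict {y | ε < |x - y|}, ‖(x - y)⁻¹‖ ≤ ε⁻¹ :=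
    ae_restrict_of_forall_mem (measurableSet_lt_abs_sub x ε) fun y hy => by
      rw [norm_inv]
      exact inv_anti₀ hε (le_of_lt hy)
  have hmeas : Measurable fun y : ℝ => (x - y)⁻¹ := by fun_prop
  refine (hf.integrableOn.bdd_mul hmeas.aestronglyMeasurable hbound).congr ?_
  filter_upwards with y
  rw [div_eq_inv_mul]

lemma tendsto_setIntegral_lt_abs_sub (hf : Integrable f) (x : ℝ) :
    Tendsto (fun ε : ℝ => ∫ y in {y | ε < |x - y|}, f y) (𝓝[>] 0) (𝓝 (∫ y, f y)) := by
  have hcover : AECover volume (𝓝[>] 0) fun ε : ℝ => {y : ℝ | ε < |x - y|} := by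
    refine ⟨?_, measurableSet_lt_abs_sub x⟩
    filter_upwards [Measure.ae_ne volume x] with y hy
    exact mem_nhdsWithin_of_mem_nhds (Iio_mem_nhds (abs_pos.2 (sub_ne_zero.2 hy.symm)))
  exact hcover.integral_tendsto_of_countably_generated hf

lemma setIntegral_lt_abs_sub_eq_add (hf : Integrable f) (hsupp : Function.support f ⊆ Icc a b)
    {ε : ℝ} (hε : 0 < ε) (ha : a ≤ x - ε) (hb : x + ε ≤ b) :
    ∫ y in {y | ε < |x - y|}, f y / (x - y) =
      (∫ y in a..(x - ε), f y / (x - y)) + ∫ y in (x + ε)..b, f y / (x - y) := by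
  have hsub : Ico a (x - ε) ∪ Ioc (x + ε) b ⊆ {y | ε < |x - y|} := by
    rintro y (hy | hy)
    · exact lt_abs.2 (Or.inl (lt_sub_comm.1 hy.2))
    · exact lt_abs.2 (Or.inr ((lt_sub_iff_add_lt'.2 hy.1).trans_eq (neg_sub x y).symm))
  have hzero : ∀ y ∈ {y | ε < |x - y|} \ (Ico a (x - ε) ∪ Ioc (x + ε) b),
      f y / (x - y) = 0 := by
    rintro y ⟨hy, hyU⟩
    have hfy : f y = 0 := by
      by_contra hne
      obtain ⟨hay, hyb⟩ := hsupp hne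
      rcases lt_abs.1 (mem_ofPred_eq ▸ hy) with h | h
      · exact hyU (Or.inl ⟨hay, by linarith⟩)
      · exact hyU (Or.inr ⟨by linarith, hyb⟩)
    rw [hfy, zero_div]
  have hint := integrableOn_div_sub hf hε x
  have hdisj : Disjoint (Ico a (x - ε)) (Ioc (x + ε) b) :=
    Set.disjoint_left.2 fun y hy hy' => by linarith [hy.2, hy'.1]
  rw [setIntegral_eq_of_subset_of_forall_sdiff_eq_zero (measurableSet_lt_abs_sub x ε) hsub hzero,
    setIntegral_union hdisj measurableSet_Ioc (hint.mono_set (subset_union_left.trans hsub))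
      (hint.mono_set (subset_union_right.trans hsub)),
    intervalIntegral.integral_of_le ha, intervalIntegral.integral_of_le hb,
    integral_Ico_eq_integral_Ioc]

lemma integral_div_sub_eq_sub {c d : ℝ} (hcd : c ≤ d) (hx : x ∉ Icc c d)
    (hf : IntervalIntegrable f volume c d) (hG : ContinuousOn G (Icc c d))
    (hG' : ∀ y ∈ Ioo c d, HasDerivAt G ((f y - k) / (x - y)) y) :
    ∫ y in c..d, f y / (x - y) = (G d - k * log (x - d)) - (G c - k * log (x - c)) := by
  have hne : ∀ y ∈ Icc c d, x - y ≠ 0 := fun y hy =>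
    sub_ne_zero.2 (ne_of_mem_of_not_mem hy hx).symm
  have hcont : ContinuousOn (fun y => G y - k * log (x - y)) (Icc c d) :=
    hG.sub (continuousOn_const.mul (ContinuousOn.log (by fun_prop) hne))
  have hderiv : ∀ y ∈ Ioo c d,
      HasDerivAt (fun y => G y - k * log (x - y)) (f y / (x - y)) y := fun y hy => by
    have hlog := ((hasDerivAt_id y).const_sub x).log (hne y (Ioo_subset_Icc_self hy))
    exact ((hG' y hy).sub (hlog.const_mul k)).congr_deriv (by simp only [id]; ring)
  have hint : IntervalIntegrable (fun y => f y / (x - y)) volume c d := by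
    simp only [div_eq_mul_inv]
    refine hf.mul_continuousOn (ContinuousOn.inv₀ (by fun_prop) ?_)
    rwa [uIcc_of_le hcd]
  exact intervalIntegral.integral_eq_sub_of_hasDerivAt_of_le hcd hcont hderiv hint

-- The logarithmic singularities of the antiderivative at `x - ε` and `x + ε` cancel.
theorem hasHilbertTransform_of_hasDerivAt_sub_div (hx : x ∈ Ioo a b) (hf : Integrable f)
    (hsupp : Function.support f ⊆ Icc a b) (hG : ContinuousOn G (Icc a b))
    (hG' : ∀ y ∈ Ioo a b, y ≠ x → HasDerivAt G ((f y - k) / (x - y)) y) :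
    HasHilbertTransform f x (1 / π * (G b - G a + k * (log (x - a) - log (b - x)))) := by
  have hGx : ContinuousAt G x := hG.continuousAt (Icc_mem_nhds hx.1 hx.2)
  have hjump : Tendsto (fun ε => G (x - ε) - G (x + ε)) (𝓝[>] 0) (𝓝 0) := by
    have hcont : ContinuousAt (fun ε => G (x - ε) - G (x + ε)) 0 :=
      (ContinuousAt.comp' (by simpa using hGx) (by fun_prop)).sub
        (ContinuousAt.comp' (by simpa using hGx) (by fun_prop))
    simpa using hcont.tendsto.mono_left nhdsWithin_le_nhds
  have hlim := ((hjump.add_const (G b - G a + k * (log (x - a) - log (b - x)))).const_mul (1 / π))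
  rw [zero_add] at hlim
  refine hlim.congr' ?_
  filter_upwards [Ioo_mem_nhdsGT (lt_min (sub_pos.2 hx.1) (sub_pos.2 hx.2))] with ε ⟨hε, hε'⟩
  obtain ⟨ha, hb⟩ := lt_min_iff.1 hε'
  have hleft : ∫ y in a..(x - ε), f y / (x - y) =
      (G (x - ε) - k * log (x - (x - ε))) - (G a - k * log (x - a)) :=
    integral_div_sub_eq_sub (by linarith) (fun h => by linarith [h.2]) hf.intervalIntegrable
      (hG.mono (Icc_subset_Icc_right (by linarith)))
      fun y hy => hG' y ⟨hy.1, by linarith [hy.2]⟩ (by linarith [hy.2])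
  have hright : ∫ y in (x + ε)..b, f y / (x - y) =
      (G b - k * log (x - b)) - (G (x + ε) - k * log (x - (x + ε))) :=
    integral_div_sub_eq_sub (by linarith) (fun h => by linarith [h.1]) hf.intervalIntegrable
      (hG.mono (Icc_subset_Icc_left (by linarith)))
      fun y hy => hG' y ⟨by linarith [hy.1], hy.2⟩ (by linarith [hy.1])
  rw [setIntegral_lt_abs_sub_eq_add hf hsupp hε (by linarith) (by linarith), hleft, hright,
    sub_sub_cancel, sub_add_cancel_left, log_neg_eq_log, ← neg_sub b x, log_neg_eq_log]
  ring

end PrincipalValue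

namespace HasHilbertTransform

variable {f : ℝ → ℝ} {x L : ℝ}

theorem const_mul (r : ℝ) (h : HasHilbertTransform f x L) :
    HasHilbertTransform (fun y => r * f y) x (r * L) := by
  refine (Tendsto.const_mul r h).congr fun ε => ?_
  simp only [mul_div_assoc, integral_const_mul]
  ring

theorem comp_sub_right {m : ℝ} (h : HasHilbertTransform f (x - m) L) :
    HasHilbertTransform (fun y => f (y - m)) x L := by
  refine h.congr fun ε => ?_
  have hshift := (measurePreserving_sub_right volume m).setIntegral_preimage_emb
    (MeasurableEquiv.subRight m).measurableEmbedding (fun y => f y / (x - m - y))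
    {y | ε < |x - m - y|}
  simp only [preimage_ofPred_eq, sub_sub_sub_cancel_right] at hshift
  rw [hshift]

/- Partial fractions: `1 / (y (x - y)) = (1 / y + 1 / (x - y)) / x`, where the first term needs no
principal value. -/
theorem div_id (h : HasHilbertTransform f x L) (hx : x ≠ 0) (hf : Integrable f)
    (hf' : Integrable fun y => f y / y) :
    HasHilbertTransform (fun y => f y / y) x (x⁻¹ * (1 / π * (∫ y, f y / y) + L)) := by
  have hlim := (((tendsto_setIntegral_lt_abs_sub hf' x).const_mul (1 / π)).add h).const_mul x⁻¹
  refine hlim.congr' ?_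
  filter_upwards [self_mem_nhdsWithin] with ε hε
  have hfrac : ∀ᵐ y, y ∈ {y | ε < |x - y|} →
      f y / y / (x - y) = x⁻¹ * (f y / y + f y / (x - y)) := by
    filter_upwards [Measure.ae_ne volume 0] with y hy hyε
    have hxy : x - y ≠ 0 := abs_pos.1 (lt_trans hε hyε)
    field_simp
    ring
  rw [setIntegral_congr_ae (measurableSet_lt_abs_sub x ε) hfrac, integral_const_mul,
    integral_add hf'.integrableOn (integrableOn_div_sub hf hε x)]
  ring

end HasHilbertTransform

section Semicircle

variable {r : ℝ}

lemma support_sqrt_sq_sub_sq_subset (hr : 0 ≤ r) :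
    Function.support (fun y => √(r ^ 2 - y ^ 2)) ⊆ Ioo (-r) r := fun y hy => by
  have h : 0 < r ^ 2 - y ^ 2 := sqrt_ne_zero'.1 hy
  exact abs_lt.1 (abs_lt_of_sq_lt_sq (sub_pos.1 h) hr)

lemma integrable_sqrt_sq_sub_sq (hr : 0 ≤ r) : Integrable fun y => √(r ^ 2 - y ^ 2) := by
  refine Continuous.integrable_of_hasCompactSupport (by fun_prop) ?_
  exact HasCompactSupport.of_support_subset_isCompact isCompact_Icc
    ((support_sqrt_sq_sub_sq_subset hr).trans Ioo_subset_Icc_self)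

lemma sq_sub_sq_pos {y : ℝ} (hy : y ∈ Ioo (-r) r) : 0 < r ^ 2 - y ^ 2 :=
  sub_pos.2 (sq_lt_sq' hy.1 hy.2)

lemma hasDerivAt_sqrt_sq_sub_sq {y : ℝ} (hy : y ∈ Ioo (-r) r) :
    HasDerivAt (fun y => √(r ^ 2 - y ^ 2)) (-y / √(r ^ 2 - y ^ 2)) y := by
  have hpos := sq_sub_sq_pos hy
  refine ((((hasDerivAt_id y).pow 2).const_sub (r ^ 2)).sqrt hpos.ne').congr_deriv ?_
  simp only [id, Pi.pow_apply, Nat.cast_ofNat, Nat.add_one_sub_one, pow_one]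
  field_simp

lemma hasDerivAt_arcsin_div {y : ℝ} (hy : y ∈ Ioo (-r) r) :
    HasDerivAt (fun y => arcsin (y / r)) (1 / √(r ^ 2 - y ^ 2)) y := by
  have hr : 0 < r := by linarith [hy.1, hy.2]
  have hlow : -1 < y / r := by rw [lt_div_iff₀ hr]; linarith [hy.1]
  have hupp : y / r < 1 := (div_lt_one hr).2 hy.2
  refine ((hasDerivAt_arcsin hlow.ne' hupp.ne).comp y
    ((hasDerivAt_id y).div_const r)).congr_deriv ?_
  have hsqrt : √(1 - (y / r) ^ 2) = √(r ^ 2 - y ^ 2) / r := by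
    rw [div_pow, one_sub_div (pow_pos hr 2).ne', sqrt_div (sq_sub_sq_pos hy).le, sqrt_sq hr.le]
  rw [hsqrt]
  field_simp

/-- The regular part of the antiderivative of `√(r² - y²) / (x - y)`, that is, an antiderivative
of `(√(r² - y²) - √(r² - x²)) / (x - y)` on `(-r, r)`. -/
noncomputable def semicircleHilbertPrimitive (r x y : ℝ) : ℝ :=
  √(r ^ 2 - x ^ 2) * log (r ^ 2 - x * y + √(r ^ 2 - x ^ 2) * √(r ^ 2 - y ^ 2))
    + x * arcsin (y / r) - √(r ^ 2 - y ^ 2)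

lemma sq_sub_mul_add_sqrt_pos {x y : ℝ} (hx : x ∈ Ioo (-r) r) (hy : y ∈ Icc (-r) r) :
    0 < r ^ 2 - x * y + √(r ^ 2 - x ^ 2) * √(r ^ 2 - y ^ 2) := by
  have hxy : x * y < r ^ 2 := calc
    x * y ≤ |x| * |y| := (le_abs_self _).trans_eq (abs_mul x y)
    _ ≤ |x| * r := mul_le_mul_of_nonneg_left (abs_le.2 hy) (abs_nonneg x)
    _ < r ^ 2 := by
      rw [sq]
      exact mul_lt_mul_of_pos_right (abs_lt.2 hx) (by linarith [hx.1, hx.2])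
  have := sub_pos.2 hxy
  positivity

lemma continuousOn_semicircleHilbertPrimitive {x : ℝ} (hx : x ∈ Ioo (-r) r) :
    ContinuousOn (semicircleHilbertPrimitive r x) (Icc (-r) r) := by
  have hlog : ContinuousOn
      (fun y => log (r ^ 2 - x * y + √(r ^ 2 - x ^ 2) * √(r ^ 2 - y ^ 2))) (Icc (-r) r) :=
    ContinuousOn.log (by fun_prop) fun y hy => (sq_sub_mul_add_sqrt_pos hx hy).ne'
  have harcsin : Continuous fun y => x * arcsin (y / r) - √(r ^ 2 - y ^ 2) := by fun_prop
  exact ((continuousOn_const.mul hlog).add harcsin.continuousOn).congr fun y _ =>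
    add_sub_assoc _ _ _

lemma hasDerivAt_semicircleHilbertPrimitive {x y : ℝ} (hx : x ∈ Ioo (-r) r) (hy : y ∈ Ioo (-r) r)
    (hyx : y ≠ x) :
    HasDerivAt (semicircleHilbertPrimitive r x)
      ((√(r ^ 2 - y ^ 2) - √(r ^ 2 - x ^ 2)) / (x - y)) y := by
  have hs := sqrt_pos.2 (sq_sub_sq_pos hy)
  have hs2 := sq_sqrt (sq_sub_sq_pos hy).le
  have hk2 := sq_sqrt (sq_sub_sq_pos hx).le
  have hN := sq_sub_mul_add_sqrt_pos hx (Ioo_subset_Icc_self hy)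
  have hxy : x - y ≠ 0 := sub_ne_zero.2 hyx.symm
  have hlog := ((((hasDerivAt_id y).const_mul x).const_sub (r ^ 2)).add
    ((hasDerivAt_sqrt_sq_sub_sq hy).const_mul √(r ^ 2 - x ^ 2))).log hN.ne'
  refine (((hlog.const_mul √(r ^ 2 - x ^ 2)).add ((hasDerivAt_arcsin_div hy).const_mul x)).sub
    (hasDerivAt_sqrt_sq_sub_sq hy)).congr_deriv ?_
  simp only [Pi.add_apply, id]
  generalize √(r ^ 2 - y ^ 2) = s at *
  generalize √(r ^ 2 - x ^ 2) = k at *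
  have hlogDeriv : (-(x * 1) + k * (-y / s)) / (r ^ 2 - x * y + k * s) =
      (k - s) / ((x - y) * s) := by
    field_simp
    linear_combination k * hs2 - s * hk2
  have hxy2 : (x + y) * (x - y) = s ^ 2 - k ^ 2 := by linear_combination hk2 - hs2
  rw [hlogDeriv]
  field_simp
  linear_combination hxy2

theorem hasHilbertTransform_sqrt_sq_sub_sq {x : ℝ} (hx : x ∈ Ioo (-r) r) :
    HasHilbertTransform (fun y => √(r ^ 2 - y ^ 2)) x x := by
  obtain ⟨hxl, hxr⟩ := hx
  have hr : 0 < r := by linarith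
  have hright : semicircleHilbertPrimitive r x r =
      √(r ^ 2 - x ^ 2) * (log r + log (r - x)) + x * (π / 2) := by
    rw [semicircleHilbertPrimitive, div_self hr.ne', arcsin_one, sub_self, sqrt_zero, mul_zero,
      add_zero, sub_zero, ← log_mul hr.ne' (by linarith), mul_sub, sq, mul_comm x r]
  have hleft : semicircleHilbertPrimitive r x (-r) =
      √(r ^ 2 - x ^ 2) * (log r + log (x + r)) - x * (π / 2) := by
    rw [semicircleHilbertPrimitive, neg_div, div_self hr.ne', arcsin_neg_one, neg_sq, sub_self,
      sqrt_zero, mul_zero, add_zero, sub_zero, ← log_mul hr.ne' (by linarith), mul_neg, mul_neg,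
      sub_neg_eq_add, ← sub_eq_add_neg, mul_add, sq, mul_comm x r, add_comm (r * r)]
  have h := hasHilbertTransform_of_hasDerivAt_sub_div ⟨hxl, hxr⟩ (integrable_sqrt_sq_sub_sq hr.le)
    ((support_sqrt_sq_sub_sq_subset hr.le).trans Ioo_subset_Icc_self)
    (continuousOn_semicircleHilbertPrimitive ⟨hxl, hxr⟩)
    fun y hy hyx => hasDerivAt_semicircleHilbertPrimitive ⟨hxl, hxr⟩ hy hyx
  convert h using 1
  rw [hright, hleft, sub_neg_eq_add]
  field_simp
  ring

/-- An antiderivative of `√(r² - y²) / (w + y)` on `(-r, r)` for a point `-w` outside the interval.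
For `w = r` the last term vanishes, because of its first factor. -/
noncomputable def semicircleStieltjesPrimitive (r w y : ℝ) : ℝ :=
  w * arcsin (y / r) + √(r ^ 2 - y ^ 2)
    - √(w ^ 2 - r ^ 2) * arcsin ((w * y + r ^ 2) / (r * (w + y)))

lemma hasDerivAt_arcsin_moebius {w y : ℝ} (hw : r < w) (hy : y ∈ Ioo (-r) r) :
    HasDerivAt (fun y => arcsin ((w * y + r ^ 2) / (r * (w + y))))
      (√(w ^ 2 - r ^ 2) / ((w + y) * √(r ^ 2 - y ^ 2))) y := by
  obtain ⟨hyl, hyr⟩ := hy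
  have hr : 0 < r := by linarith
  have hwy : 0 < w + y := by linarith
  have hs := sqrt_pos.2 (sq_sub_sq_pos ⟨hyl, hyr⟩)
  have hk : 0 < w ^ 2 - r ^ 2 := sub_pos.2 (pow_lt_pow_left₀ hw hr.le two_ne_zero)
  have := sqrt_pos.2 hk
  have hden : r * (w + y) ≠ 0 := by positivity
  have hlow : -1 < (w * y + r ^ 2) / (r * (w + y)) := by
    rw [lt_div_iff₀ (by positivity)]
    linarith [mul_pos (add_pos (hr.trans hw) hr) (neg_lt_iff_pos_add.1 hyl)]
  have hupp : (w * y + r ^ 2) / (r * (w + y)) < 1 := by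
    rw [div_lt_one (by positivity)]
    linarith [mul_pos (sub_pos.2 hw) (sub_pos.2 hyr)]
  have hsqrt : √(1 - ((w * y + r ^ 2) / (r * (w + y))) ^ 2) =
      √(w ^ 2 - r ^ 2) * √(r ^ 2 - y ^ 2) / (r * (w + y)) := by
    have hfactor : (r * (w + y)) ^ 2 - (w * y + r ^ 2) ^ 2 =
        (w ^ 2 - r ^ 2) * (r ^ 2 - y ^ 2) := by ring
    rw [div_pow, one_sub_div (pow_ne_zero 2 hden), hfactor, sqrt_div
      (mul_pos hk (sq_sub_sq_pos ⟨hyl, hyr⟩)).le, sqrt_sq (by positivity), sqrt_mul hk.le]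
  have hquot := (((hasDerivAt_id y).const_mul w).add_const (r ^ 2)).div
    (((hasDerivAt_id y).const_add w).const_mul r) hden
  refine ((hasDerivAt_arcsin hlow.ne' hupp.ne).comp y hquot).congr_deriv ?_
  simp only [id]
  rw [hsqrt]
  have hk2 := sq_sqrt hk.le
  field_simp
  linear_combination -hk2

lemma hasDerivAt_semicircleStieltjesPrimitive {w y : ℝ} (hw : r ≤ w) (hy : y ∈ Ioo (-r) r) :
    HasDerivAt (semicircleStieltjesPrimitive r w) (√(r ^ 2 - y ^ 2) / (w + y)) y := by
  have hwy : 0 < w + y := by linarith [hy.1]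
  have hpos := sq_sub_sq_pos hy
  have := sqrt_pos.2 hpos
  have hk : 0 ≤ w ^ 2 - r ^ 2 :=
    sub_nonneg.2 (pow_le_pow_left₀ (by linarith [hy.1, hy.2]) hw 2)
  have harc : HasDerivAt
      (fun y => √(w ^ 2 - r ^ 2) * arcsin ((w * y + r ^ 2) / (r * (w + y))))
      ((w ^ 2 - r ^ 2) / ((w + y) * √(r ^ 2 - y ^ 2))) y := by
    rcases hw.eq_or_lt with rfl | hlt
    · simpa using hasDerivAt_const y (0 : ℝ)
    · refine ((hasDerivAt_arcsin_moebius hlt hy).const_mul _).congr_deriv ?_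
      rw [← mul_div_assoc, mul_self_sqrt hk]
  refine ((((hasDerivAt_arcsin_div hy).const_mul w).add (hasDerivAt_sqrt_sq_sub_sq hy)).sub
    harc).congr_deriv ?_
  field_simp
  rw [sq_sqrt hpos.le]
  ring

lemma continuousOn_semicircleStieltjesPrimitive {w : ℝ} (hr : 0 < r) (hw : r ≤ w) :
    ContinuousOn (semicircleStieltjesPrimitive r w) (Icc (-r) r) := by
  refine ContinuousOn.sub (by fun_prop) ?_
  rcases hw.eq_or_lt with rfl | hlt
  · simpa using continuousOn_const
  · refine continuousOn_const.mul (continuous_arcsin.comp_continuousOn ?_)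
    refine ContinuousOn.div (by fun_prop) (by fun_prop) fun y hy => ?_
    have : 0 < w + y := by linarith [hy.1]
    positivity

lemma semicircleStieltjesPrimitive_sub_neg {w : ℝ} (hr : 0 < r) (hw : r ≤ w) :
    semicircleStieltjesPrimitive r w r - semicircleStieltjesPrimitive r w (-r) =
      π * (w - √(w ^ 2 - r ^ 2)) := by
  have harcsin : √(w ^ 2 - r ^ 2) * (arcsin ((w * r + r ^ 2) / (r * (w + r))) -
      arcsin ((w * -r + r ^ 2) / (r * (w + -r)))) = √(w ^ 2 - r ^ 2) * π := by
    rcases hw.eq_or_lt with rfl | hlt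
    · simp
    · have hright : (w * r + r ^ 2) / (r * (w + r)) = 1 := by
        have : w + r ≠ 0 := by linarith
        field_simp
      have hleft : (w * -r + r ^ 2) / (r * (w + -r)) = -1 := by
        have : w + -r ≠ 0 := by linarith
        field_simp
        ring
      rw [hright, hleft, arcsin_one, arcsin_neg_one]
      ring
  simp only [semicircleStieltjesPrimitive, neg_div, div_self hr.ne', arcsin_one, arcsin_neg_one,
    neg_sq]
  linear_combination -harcsin

lemma support_sqrt_sq_sub_sq_div_subset (hr : 0 ≤ r) (w : ℝ) :
    Function.support (fun y => √(r ^ 2 - y ^ 2) / (w + y)) ⊆ Ioc (-r) r :=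
  (Function.support_div _ _).trans_subset
    (inter_subset_left.trans ((support_sqrt_sq_sub_sq_subset hr).trans Ioo_subset_Ioc_self))

lemma integrable_sqrt_sq_sub_sq_div {w : ℝ} (hr : 0 < r) (hw : r ≤ w) :
    Integrable fun y => √(r ^ 2 - y ^ 2) / (w + y) := by
  rw [← integrableOn_iff_integrable_of_support_subset (support_sqrt_sq_sub_sq_div_subset hr.le w)]
  refine intervalIntegral.integrableOn_deriv_of_nonneg
    (continuousOn_semicircleStieltjesPrimitive hr hw)
    (fun y hy => hasDerivAt_semicircleStieltjesPrimitive hw hy) fun y hy => ?_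
  have : 0 < w + y := by linarith [hy.1]
  positivity

theorem integral_sqrt_sq_sub_sq_div {w : ℝ} (hr : 0 < r) (hw : r ≤ w) :
    ∫ y, √(r ^ 2 - y ^ 2) / (w + y) = π * (w - √(w ^ 2 - r ^ 2)) := by
  rw [← intervalIntegral.integral_eq_integral_of_support_subset
      (support_sqrt_sq_sub_sq_div_subset hr.le w),
    intervalIntegral.integral_eq_sub_of_hasDerivAt_of_le (by linarith)
      (continuousOn_semicircleStieltjesPrimitive hr hw)
      (fun y hy => hasDerivAt_semicircleStieltjesPrimitive hw hy)
      (integrable_sqrt_sq_sub_sq_div hr hw).intervalIntegrable,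
    semicircleStieltjesPrimitive_sub_neg hr hw]

theorem hasHilbertTransform_sqrt_sq_sub_sub_sq_div {m x : ℝ} (hm : r ≤ m)
    (hx : x ∈ Ioo (m - r) (m + r)) :
    HasHilbertTransform (fun y => √(r ^ 2 - (y - m) ^ 2) / y) x
      ((x - √(m ^ 2 - r ^ 2)) / x) := by
  obtain ⟨hxl, hxr⟩ := hx
  have hr : 0 < r := by linarith
  have hx0 : x ≠ 0 := by linarith
  have hshift : HasHilbertTransform (fun y => √(r ^ 2 - (y - m) ^ 2)) x (x - m) :=
    (hasHilbertTransform_sqrt_sq_sub_sq ⟨by linarith, by linarith⟩).comp_sub_right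
  have hint : Integrable fun y => √(r ^ 2 - (y - m) ^ 2) / y := by
    simpa using (integrable_sqrt_sq_sub_sq_div hr hm).comp_sub_right m
  have hmass : ∫ y, √(r ^ 2 - (y - m) ^ 2) / y = π * (m - √(m ^ 2 - r ^ 2)) := by
    have h := integral_sub_right_eq_self (fun y => √(r ^ 2 - y ^ 2) / (m + y)) m (μ := volume)
    simpa [integral_sqrt_sq_sub_sq_div hr hm] using h
  convert hshift.div_id hx0 ((integrable_sqrt_sq_sub_sq hr.le).comp_sub_right m) hint using 1
  rw [hmass]
  field_simp
  ring

end Semicircle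

section MarchenkoPastur

variable {c t x : ℝ}

/-- The family `u_c(t, x) = v((c + t) / (1 - t), x / (1 - t))`. -/
noncomputable def mpFamily (c t x : ℝ) : ℝ := mpDensity ((c + t) / (1 - t)) (x / (1 - t))

/-- The quadratic polynomial in `x` which is positive exactly on the support of `u_c(t, ·)`. -/
def mpQuadratic (c t x : ℝ) : ℝ := 2 * (2 + c - t) * x - (c + t) ^ 2 - x ^ 2

lemma mpQuadratic_eq_sub_sq (c t x : ℝ) :
    mpQuadratic c t x = 4 * (1 + c) * (1 - t) - (x - (2 + c - t)) ^ 2 := by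
  rw [mpQuadratic]
  ring

lemma mpQuadratic_eq_mul_sub_sq (c t x : ℝ) :
    mpQuadratic c t x = 4 * ((1 - t) * x) - (x - (c + t)) ^ 2 := by
  rw [mpQuadratic]
  ring

lemma one_sub_mul_pos_of_mpQuadratic_pos (hx : 0 < mpQuadratic c t x) : 0 < (1 - t) * x := by
  rw [mpQuadratic_eq_mul_sub_sq] at hx
  linarith [sq_nonneg (x - (c + t))]

/- No indicator is needed: outside `[x₋, x₊]` the radicand is negative, so that `√` returns `0`. -/
lemma mpDensity_eq_sqrt_div (c y : ℝ) :
    mpDensity c y = √((mpXp c - y) * (y - mpXm c)) / (2 * π * y) := by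
  refine congrFun (indicator_eq_self.2 fun z hz => ?_) y
  have hsqrt : √((mpXp c - z) * (z - mpXm c)) ≠ 0 := (div_ne_zero_iff.1 hz).1
  have hedges : mpXm c ≤ mpXp c := by
    rw [mpXm, mpXp]
    linarith [sqrt_nonneg (c + 1)]
  rcases mul_pos_iff.1 (sqrt_ne_zero'.1 hsqrt) with h | h
  · exact ⟨sub_pos.1 h.2, sub_pos.1 h.1⟩
  · linarith [h.1, h.2]

lemma mpXp_sub_mul_sub_mpXm (hc : -1 ≤ c) (y : ℝ) :
    (mpXp c - y) * (y - mpXm c) = 4 * y - (y - c) ^ 2 := by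
  have hsq := sq_sqrt (show 0 ≤ c + 1 by linarith)
  rw [mpXp, mpXm]
  linear_combination (2 * y + 2 - √(c + 1) ^ 2 - (c + 1)) * hsq

lemma mpFamily_eq_sqrt_div (hc : -1 ≤ c) (ht : t < 1) (x : ℝ) :
    mpFamily c t x = √(mpQuadratic c t x) / (2 * π * x) := by
  have ht' : 0 < 1 - t := sub_pos.2 ht
  have hparam : -1 ≤ (c + t) / (1 - t) := by
    rw [le_div_iff₀ ht']
    linarith
  have hscale : 4 * (x / (1 - t)) - (x / (1 - t) - (c + t) / (1 - t)) ^ 2 =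
      mpQuadratic c t x / (1 - t) ^ 2 := by
    rw [mpQuadratic_eq_mul_sub_sq]
    field_simp
  rw [mpFamily, mpDensity_eq_sqrt_div, mpXp_sub_mul_sub_mpXm hparam, hscale,
    sqrt_div' _ (sq_nonneg (1 - t)), sqrt_sq ht'.le]
  field_simp

theorem hasHilbertTransform_mpFamily (hct : 0 ≤ c + t) (ht : t < 1) (hx : 0 < mpQuadratic c t x) :
    HasHilbertTransform (mpFamily c t) x ((x - (c + t)) / (2 * π * x)) := by
  set m := 2 + c - t with hm
  set r := √(4 * (1 + c) * (1 - t))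
  have hr2 : r ^ 2 = 4 * (1 + c) * (1 - t) :=
    sq_sqrt (mul_nonneg (by linarith) (by linarith))
  have hm2 : m ^ 2 - r ^ 2 = (c + t) ^ 2 := by
    rw [hr2, hm]
    ring
  have hrm : r ≤ m :=
    (sq_le_sq₀ (sqrt_nonneg _) (by linarith)).1 (sub_nonneg.1 (hm2 ▸ sq_nonneg _))
  have hxm : |x - m| < r := by
    refine abs_lt_of_sq_lt_sq (sub_pos.1 ?_) (sqrt_nonneg _)
    rwa [hr2, ← mpQuadratic_eq_sub_sq]
  have hfamily : mpFamily c t = fun y => 1 / (2 * π) * (√(r ^ 2 - (y - m) ^ 2) / y) := by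
    funext y
    rw [mpFamily_eq_sqrt_div (by linarith) ht, mpQuadratic_eq_sub_sq, hr2, div_mul_div_comm,
      one_mul]
  have hhilbert := hasHilbertTransform_sqrt_sq_sub_sub_sq_div hrm (x := x)
    ⟨by linarith [(abs_lt.1 hxm).1], by linarith [(abs_lt.1 hxm).2]⟩
  rw [hm2, sqrt_sq hct] at hhilbert
  rw [hfamily, ← one_mul (x - (c + t)), ← div_mul_div_comm]
  exact hhilbert.const_mul (1 / (2 * π))

theorem hasDerivAt_mpFamily_time (hc : -1 ≤ c) (ht : t < 1) (hx : 0 < mpQuadratic c t x) :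
    HasDerivAt (fun s => mpFamily c s x)
      (-(x + (c + t)) / (2 * π * x * √(mpQuadratic c t x))) t := by
  have hformula : (fun s => mpFamily c s x) =ᶠ[𝓝 t]
      fun s => √(mpQuadratic c s x) / (2 * π * x) := by
    filter_upwards [Iio_mem_nhds ht] with s hs using mpFamily_eq_sqrt_div hc hs x
  have hquad : HasDerivAt (fun s => mpQuadratic c s x) (-2 * (x + (c + t))) t := by
    refine ((((((hasDerivAt_id t).const_sub (2 + c)).const_mul 2).mul_const x).sub
      (((hasDerivAt_id t).const_add c).pow 2)).sub_const (x ^ 2)).congr_deriv ?_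
    simp only [id, Nat.cast_ofNat, Nat.add_one_sub_one, pow_one]
    ring
  refine (((hquad.sqrt hx.ne').div_const (2 * π * x)).congr_deriv ?_).congr_of_eventuallyEq hformula
  field_simp

lemma hasDerivAt_arctan_div_sqrt_mpQuadratic (hx : 0 < mpQuadratic c t x) :
    HasDerivAt (fun y => arctan ((y - (c + t)) / √(mpQuadratic c t y)))
      ((x + (c + t)) / (2 * x * √(mpQuadratic c t x))) x := by
  have hs := sqrt_pos.2 hx
  have hs2 := sq_sqrt hx.le
  obtain ⟨ht, hx0⟩ := mul_ne_zero_iff.1 (one_sub_mul_pos_of_mpQuadratic_pos hx).ne'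
  have hquad : HasDerivAt (mpQuadratic c t) (2 * (2 + c - t) - 2 * x) x := by
    refine ((((hasDerivAt_id x).const_mul (2 * (2 + c - t))).sub_const ((c + t) ^ 2)).sub
      ((hasDerivAt_id x).pow 2)).congr_deriv ?_
    simp only [id, Nat.cast_ofNat, Nat.add_one_sub_one, pow_one, mul_one]
  refine ((((hasDerivAt_id x).sub_const (c + t)).div (hquad.sqrt hx.ne') hs.ne').arctan).congr_deriv
    ?_
  simp only [Pi.div_apply, id]
  generalize √(mpQuadratic c t x) = s at *
  rw [mpQuadratic_eq_mul_sub_sq] at hs2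
  have hden : 1 + ((x - (c + t)) / s) ^ 2 = 4 * (1 - t) * x / s ^ 2 := by
    field_simp
    linear_combination hs2
  have hnum : (1 * s - (x - (c + t)) * ((2 * (2 + c - t) - 2 * x) / (2 * s))) / s ^ 2 =
      2 * (1 - t) * (x + (c + t)) / s ^ 3 := by
    field_simp
    linear_combination hs2
  rw [hden, hnum]
  field_simp
  ring

theorem hasDerivAt_arctan_div_mpFamily (hc : -1 ≤ c) (ht : t < 1) (hx : 0 < mpQuadratic c t x) :
    HasDerivAt (fun y => arctan ((y - (c + t)) / (2 * π * y) / mpFamily c t y))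
      ((x + (c + t)) / (2 * x * √(mpQuadratic c t x))) x := by
  have hx0 := right_ne_zero_of_mul (one_sub_mul_pos_of_mpQuadratic_pos hx).ne'
  refine (hasDerivAt_arctan_div_sqrt_mpQuadratic hx).congr_of_eventuallyEq ?_
  filter_upwards [isOpen_ne.mem_nhds hx0] with y hy
  rw [mpFamily_eq_sqrt_div hc ht, div_div_div_cancel_right₀ (mul_ne_zero two_pi_pos.ne' hy)]

theorem marchenko_pastur_solves_transport_equation_general (hct : 0 ≤ c + t) (ht : t < 1)
    (hx : 0 < 2 * (2 + c - t) * x - (c + t) ^ 2 - x ^ 2) :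
    ∃ Hu : ℝ → ℝ,
      (∀ y : ℝ, 0 < 2 * (2 + c - t) * y - (c + t) ^ 2 - y ^ 2 →
        HasHilbertTransform (fun z => mpDensity ((c + t) / (1 - t)) (z / (1 - t))) y (Hu y)) ∧
      ∃ ut a : ℝ,
        HasDerivAt (fun s : ℝ => mpDensity ((c + s) / (1 - s)) (x / (1 - s))) ut t ∧
        HasDerivAt (fun y =>
          Real.arctan (Hu y / mpDensity ((c + t) / (1 - t)) (y / (1 - t)))) a x ∧
        ut + (1 / π) * a = 0 := by
  have hc : -1 ≤ c := by linarith
  refine ⟨fun y => (y - (c + t)) / (2 * π * y), fun y hy => hasHilbertTransform_mpFamily hct ht hy,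
    _, _, hasDerivAt_mpFamily_time hc ht hx, hasDerivAt_arctan_div_mpFamily hc ht hx, ?_⟩
  ring

end MarchenkoPastur

/-- The Marchenko–Pastur family `u_c(t,x) = v((c+t)/(1−t), x/(1−t))` solves the nonlocal
transport equation `∂_t u + (1/π)·∂_x[arctan(Hu/u)] = 0` on its support: for every
`t ∈ [0,1)` and `x` with `2(2+c−t)x − (c+t)² − x² > 0`. -/
theorem marchenko_pastur_solves_transport_equation (c : ℝ) (hc : 0 ≤ c)
    (t : ℝ) (ht : t ∈ Set.Ico (0 : ℝ) 1) (x : ℝ)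
    (hx : 0 < 2 * (2 + c - t) * x - (c + t) ^ 2 - x ^ 2) :
    ∃ Hu : ℝ → ℝ,
      (∀ y : ℝ, 0 < 2 * (2 + c - t) * y - (c + t) ^ 2 - y ^ 2 →
        HasHilbertTransform (fun z => mpDensity ((c + t) / (1 - t)) (z / (1 - t))) y (Hu y)) ∧
      ∃ ut a : ℝ,
        HasDerivAt (fun s : ℝ => mpDensity ((c + s) / (1 - s)) (x / (1 - s))) ut t ∧
        HasDerivAt (fun y =>
          Real.arctan (Hu y / mpDensity ((c + t) / (1 - t)) (y / (1 - t)))) a x ∧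
        ut + (1 / π) * a = 0 := by
  exact marchenko_pastur_solves_transport_equation_general (add_nonneg hc ht.1) ht.2 hx
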